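/- arXiv:1910.06405 — 2 statements merged into one kernel-verified Lean document; each statement's English description precedes it below -/
import Mathlib

section
/- Let G be a finite simple graph and let σ be a preordering of G of even length m. Then σ-gcol(G) ≤ σ-gcol_B(G); that is, Alice cannot obtain a smaller score in the σ-game by letting Bob move first (equivalently, by skipping her first turn). -/
open scoped Classical

/-- The number of backneighbors of `v` with respect to the ordering `τ`:
neighbors of `v` in `G` that appear (strictly) before `v` in `τ`. -/
noncomputable def backDeg {V : Type*} [Fintype V] (G : SimpleGraph V)
    (τ : List V) (v : V) : ℕ :=
  (Finset.univ.filter (fun u =>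
    G.Adj v u ∧ ∃ i j : Fin τ.length, i < j ∧ τ.get i = u ∧ τ.get j = v)).card

/-- `col(G, τ)`: the maximum over all vertices `v` of
`1 +` (the number of backneighbors of `v` with respect to `τ`). -/
noncomputable def colOrd {V : Type*} [Fintype V] (G : SimpleGraph V)
    (τ : List V) : ℕ :=
  Finset.univ.sup (fun v => 1 + backDeg G τ v)

/-- The minimax value of the ordering game on `G` continued from the position
(partial ordering) `σ`, where `alice = true` means it is Alice's turn to choose
an unchosen vertex (Alice minimizes the final score `colOrd G τ`, Bob
maximizes it).  This value is the least `s` such that the player-to-move's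
opponent-robust guarantee holds, i.e. the least `s` such that Alice has a
strategy from this position guaranteeing a score of at most `s`. -/
noncomputable def gameVal {V : Type*} [Fintype V] (G : SimpleGraph V)
    (alice : Bool) (σ : List V) : ℕ :=
  if h : (Finset.univ.filter (fun v : V => v ∉ σ)).Nonempty then
    if alice then
      (Finset.univ.filter (fun v : V => v ∉ σ)).attach.inf'
        (Finset.attach_nonempty_iff.mpr h)
        (fun v => gameVal G false (σ ++ [v.1]))
    else
      (Finset.univ.filter (fun v : V => v ∉ σ)).attach.sup'
        (Finset.attach_nonempty_iff.mpr h)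
        (fun v => gameVal G true (σ ++ [v.1]))
  else colOrd G σ
termination_by (Finset.univ.filter (fun v : V => v ∉ σ)).card
decreasing_by
  all_goals {
    have hv : ↑v ∉ σ := (Finset.mem_filter.mp v.2).2
    apply Finset.card_lt_card
    constructor
    · intro u hu
      simp only [Finset.mem_filter, List.mem_append] at hu ⊢
      exact ⟨hu.1, fun h' => hu.2 (Or.inl h')⟩
    · intro hsub
      have := hsub (Finset.mem_filter.mpr ⟨Finset.mem_univ _, hv⟩)
      simp at this }

/-- The game coloring number of `G`: the value of the ordering game on `G`
with Alice moving first (also written `gcol_A`). -/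
noncomputable def gcol {V : Type*} [Fintype V] (G : SimpleGraph V) : ℕ :=
  gameVal G true []

/-- The value of the Bob ordering game on `G` (Bob moves first). -/
noncomputable def gcolB {V : Type*} [Fintype V] (G : SimpleGraph V) : ℕ :=
  gameVal G false []

/-- The `σ`-game coloring number of `G`: the value of the `σ`-preordered
ordering game, in which Alice moves first if `|σ|` is even and Bob moves
first if `|σ|` is odd. -/
noncomputable def sigmaGcol {V : Type*} [Fintype V] (G : SimpleGraph V)
    (σ : List V) : ℕ :=
  if Even σ.length then gameVal G true σ else gameVal G false σ

/-- The Alice `σ`-game coloring number: the value of the `σ`-preordered game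
in which Alice moves first. -/
noncomputable def sigmaGcolA {V : Type*} [Fintype V] (G : SimpleGraph V)
    (σ : List V) : ℕ :=
  gameVal G true σ

/-- The Bob `σ`-game coloring number: the value of the `σ`-preordered game
in which Bob moves first. -/
noncomputable def sigmaGcolB {V : Type*} [Fintype V] (G : SimpleGraph V)
    (σ : List V) : ℕ :=
  gameVal G false σ

def SafeMove {V : Type*} [Fintype V] (G : SimpleGraph V) (s : ℕ) (C : Finset V) (v : V) : Prop :=
  1 + (Finset.univ.filter (fun u => G.Adj v u ∧ u ∈ C)).card ≤ s

def WinPos {V : Type*} [Fintype V] (G : SimpleGraph V) (s : ℕ) : ℕ → Bool → Finset V → Prop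
  | 0, _, _ => True
  | n+1, true, C => ∃ v, v ∉ C ∧ SafeMove G s C v ∧ WinPos G s n false (insert v C)
  | n+1, false, C => ∀ v, v ∉ C → SafeMove G s C v ∧ WinPos G s n true (insert v C)

theorem SafeMove.mono {V : Type*} [Fintype V] {G : SimpleGraph V} {s : ℕ} {C D : Finset V} {v : V}
    (h : SafeMove G s D v) (hCD : C ⊆ D) : SafeMove G s C v := by
  unfold SafeMove at *
  refine le_trans (Nat.add_le_add_left (Finset.card_le_card ?_) 1) h
  intro u hu
  simp only [Finset.mem_filter] at *
  exact ⟨hu.1, hu.2.1, hCD hu.2.2⟩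

theorem exists_notMem_of_card {V : Type*} [Fintype V] {C : Finset V} {n : ℕ}
    (h : C.card + (n+1) = Fintype.card V) : ∃ v, v ∉ C := by
  by_contra hc
  push Not at hc
  have : C = Finset.univ := Finset.eq_univ_iff_forall.mpr hc
  rw [this, Finset.card_univ] at h
  omega

theorem card_step {V : Type*} [Fintype V] {C : Finset V} {n : ℕ} {v : V} (hv : v ∉ C)
    (h : C.card + (n+1) = Fintype.card V) : (insert v C).card + n = Fintype.card V := by
  rw [Finset.card_insert_of_notMem hv]; omega

theorem exists_small {V : Type*} [Fintype V] (G : SimpleGraph V) (s : ℕ) :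
    ∀ (n : ℕ) (a : Bool) (C : Finset V), C.card + (n+1) = Fintype.card V →
      WinPos G s (n+1) a C → ∃ v, v ∉ C ∧ SafeMove G s Finset.univ v := by
  intro n
  induction n with
  | zero =>
    intro a C hC hW
    obtain ⟨v, hv, hs⟩ : ∃ v, v ∉ C ∧ SafeMove G s C v := by
      cases a
      · obtain ⟨v, hv⟩ := exists_notMem_of_card hC
        exact ⟨v, hv, (hW v hv).1⟩
      · obtain ⟨v, hv, h, _⟩ := hW
        exact ⟨v, hv, h⟩
    have hu : insert v C = Finset.univ := by
      rw [← Finset.card_eq_iff_eq_univ]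
      exact card_step hv hC
    refine ⟨v, hv, ?_⟩
    unfold SafeMove at *
    refine le_trans (Nat.add_le_add_left (Finset.card_le_card ?_) 1) hs
    intro u hmem
    simp only [Finset.mem_filter, Finset.mem_univ, true_and, and_true] at *
    refine ⟨hmem, ?_⟩
    have : u ∈ insert v C := by rw [hu]; exact Finset.mem_univ u
    rcases Finset.mem_insert.mp this with rfl | h
    · exact absurd hmem (G.irrefl)
    · exact h
  | succ n ih =>
    intro a C hC hW
    obtain ⟨v, hv, a', hs⟩ : ∃ v, v ∉ C ∧ ∃ a', WinPos G s (n+1) a' (insert v C) := by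
      cases a
      · obtain ⟨v, hv⟩ := exists_notMem_of_card hC
        exact ⟨v, hv, _, (hW v hv).2⟩
      · obtain ⟨v, hv, _, h⟩ := hW
        exact ⟨v, hv, _, h⟩
    obtain ⟨w, hw, h⟩ := ih a' _ (card_step hv hC) hs
    exact ⟨w, fun h' => hw (Finset.mem_insert_of_mem h'), h⟩

theorem win_main {V : Type*} [Fintype V] (G : SimpleGraph V) (s : ℕ) (n : ℕ) :
    (∀ C : Finset V, C.card + n = Fintype.card V → WinPos G s n false C → WinPos G s n true C) ∧
    (∀ (C : Finset V) (b : V), b ∉ C → C.card + (n+1) = Fintype.card V →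
      SafeMove G s Finset.univ b → WinPos G s n false (insert b C) →
      WinPos G s (n+1) false C) := by
  induction n using Nat.strong_induction_on with
  | _ n ih =>
  have hA : ∀ C : Finset V, C.card + n = Fintype.card V → WinPos G s n false C →
      WinPos G s n true C := by
    intro C hC hW
    rcases n with _ | _ | k
    · trivial
    · obtain ⟨v, hv⟩ := exists_notMem_of_card hC
      exact ⟨v, hv, (hW v hv).1, trivial⟩
    · obtain ⟨b, hb, hbs⟩ := exists_small G s _ _ C hC hW
      obtain ⟨x, hx, hxs, hxW⟩ := (hW b hb).2
      have hxC : x ∉ C := fun h => hx (Finset.mem_insert_of_mem h)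
      refine ⟨x, hxC, hxs.mono (Finset.subset_insert _ _), ?_⟩
      refine (ih k (by omega)).2 (insert x C) b ?_ (card_step hxC hC) hbs ?_
      · simp only [Finset.mem_insert, not_or] at *
        exact ⟨fun h => hx.1 h.symm, hb⟩
      · rw [Finset.insert_comm]; exact hxW
  refine ⟨hA, ?_⟩
  intro C b hb hC hbs hW v hv
  have hc := card_step hb hC
  by_cases hvb : v = b
  · subst hvb
    exact ⟨hbs.mono (Finset.subset_univ _), hA _ hc hW⟩
  rcases n with _ | n
  · exfalso
    have hu : insert b C = Finset.univ := by
      rw [← Finset.card_eq_iff_eq_univ]; exact hc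
    have : v ∈ insert b C := by rw [hu]; exact Finset.mem_univ v
    rcases Finset.mem_insert.mp this with h | h
    · exact hvb h
    · exact hv h
  · have hv' : v ∉ insert b C := by simp [hvb, hv]
    obtain ⟨h1, h2⟩ := hW v hv'
    refine ⟨h1.mono (Finset.subset_insert _ _), ?_⟩
    have hbv : b ∉ insert v C := by simp [hb, Ne.symm hvb]
    rcases n with _ | m
    · exact ⟨b, hbv, hbs.mono (Finset.subset_univ _), trivial⟩
    · obtain ⟨y, hy, hys, hyW⟩ := h2
      have hy3 : y ≠ v ∧ y ≠ b ∧ y ∉ C := by simpa using hy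
      have hyv : y ∉ insert v C := by simp [hy3]
      refine ⟨y, hyv, hys.mono ?_, ?_⟩
      · exact Finset.insert_subset_insert _ (Finset.subset_insert _ _)
      · refine (ih m (by omega)).2 (insert y (insert v C)) b ?_
          (card_step hyv (card_step hv hC)) hbs ?_
        · simp [hb, Ne.symm hvb, Ne.symm hy3.2.1]
        · rw [Finset.insert_comm b y, Finset.insert_comm b v]; exact hyW

theorem backDeg_append_self {V : Type*} [Fintype V] (G : SimpleGraph V) (σ : List V) (v : V)
    (hv : v ∉ σ) : backDeg G (σ ++ [v]) v =
      (Finset.univ.filter (fun u => G.Adj v u ∧ u ∈ σ.toFinset)).card := by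
  unfold backDeg
  congr 1
  ext u
  simp only [Finset.mem_filter, Finset.mem_univ, true_and, List.mem_toFinset]
  refine and_congr_right fun hadj => ⟨?_, ?_⟩
  · rintro ⟨i, j, hij, rfl, -⟩
    have hi := i.2
    have hj := j.2
    have hij' : (i:ℕ) < j := hij
    simp only [List.length_append, List.length_singleton] at hj
    have : (i:ℕ) < σ.length := by omega
    simp only [List.get_eq_getElem, List.getElem_append_left this]
    exact List.getElem_mem _
  · intro hu
    obtain ⟨i, hi, rfl⟩ := List.getElem_of_mem hu
    refine ⟨⟨i, by simp; omega⟩, ⟨σ.length, by simp⟩, hi, ?_, ?_⟩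
    · simp [List.getElem_append_left hi]
    · simp

theorem backDeg_append_of_mem {V : Type*} [Fintype V] (G : SimpleGraph V) (σ : List V) (v w : V)
    (hv : v ∉ σ) (hw : w ∈ σ) : backDeg G (σ ++ [v]) w = backDeg G σ w := by
  unfold backDeg
  congr 1
  ext u
  simp only [Finset.mem_filter, Finset.mem_univ, true_and]
  refine and_congr_right fun hadj => ⟨?_, ?_⟩
  · rintro ⟨i, j, hij, rfl, hjw⟩
    have hj := j.2
    have hij' : (i:ℕ) < j := hij
    simp only [List.length_append, List.length_singleton] at hj
    have hj' : (j:ℕ) < σ.length := by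
      by_contra hcon
      have hje : (j:ℕ) = σ.length := by omega
      simp only [List.get_eq_getElem, hje] at hjw
      simp at hjw
      exact hv (hjw ▸ hw)
    have hi' : (i:ℕ) < σ.length := by omega
    refine ⟨⟨i, hi'⟩, ⟨j, hj'⟩, hij', ?_, ?_⟩
    · simp [List.getElem_append_left hi']
    · rw [← hjw]; simp [List.getElem_append_left hj']
  · rintro ⟨i, j, hij, rfl, rfl⟩
    have hi := i.2
    have hj := j.2
    refine ⟨⟨i, by rw [List.length_append]; omega⟩, ⟨j, by rw [List.length_append]; omega⟩, hij, ?_, ?_⟩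
    · simp [List.getElem_append_left hi]
    · simp [List.getElem_append_left hj]

theorem past_step {V : Type*} [Fintype V] (G : SimpleGraph V) (s : ℕ) (σ : List V) (v : V)
    (hv : v ∉ σ) : (∀ w ∈ σ ++ [v], 1 + backDeg G (σ ++ [v]) w ≤ s) ↔
      (SafeMove G s σ.toFinset v ∧ ∀ w ∈ σ, 1 + backDeg G σ w ≤ s) := by
  unfold SafeMove
  rw [← backDeg_append_self G σ v hv]
  constructor
  · intro h
    refine ⟨h v (by simp), fun w hw => ?_⟩
    rw [← backDeg_append_of_mem G σ v w hv hw]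
    exact h w (by simp [hw])
  · rintro ⟨h1, h2⟩ w hw
    rcases List.mem_append.mp hw with h | h
    · rw [backDeg_append_of_mem G σ v w hv h]; exact h2 w h
    · rw [List.mem_singleton.mp h]; exact h1

theorem gameVal_le_iff {V : Type*} [Fintype V] (G : SimpleGraph V) (s : ℕ) :
    ∀ (n : ℕ) (a : Bool) (σ : List V), σ.toFinset.card + n = Fintype.card V →
      (gameVal G a σ ≤ s ↔
        (WinPos G s n a σ.toFinset ∧ ∀ w ∈ σ, 1 + backDeg G σ w ≤ s)) := by
  intro n
  induction n with
  | zero =>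
    intro a σ hσ
    have hu : σ.toFinset = Finset.univ := by
      rw [← Finset.card_eq_iff_eq_univ]; exact hσ
    have hall : ∀ v, v ∈ σ := fun v => by
      rw [← List.mem_toFinset, hu]; exact Finset.mem_univ v
    rw [gameVal, dif_neg (by simp [hall])]
    simp [colOrd, WinPos, hall]
  | succ n ih =>
    intro a σ hσ
    obtain ⟨v₀, hv₀⟩ := exists_notMem_of_card hσ
    have hv₀' : v₀ ∉ σ := by simpa using hv₀
    have hne : (Finset.univ.filter (fun v : V => v ∉ σ)).Nonempty := ⟨v₀, by simp [hv₀']⟩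
    have key : ∀ a v, v ∉ σ → (gameVal G a (σ ++ [v]) ≤ s ↔
        (WinPos G s n a (insert v σ.toFinset) ∧ SafeMove G s σ.toFinset v ∧
          ∀ w ∈ σ, 1 + backDeg G σ w ≤ s)) := by
      intro a v hv
      have he : (σ ++ [v]).toFinset = insert v σ.toFinset := by
        ext u; simp [or_comm]
      rw [ih a (σ ++ [v]) (by rw [he]; exact card_step (by simpa using hv) hσ),
        past_step G s σ v hv, he]
    rw [gameVal, dif_pos hne]
    cases a
    · simp only [Bool.false_eq_true, if_false, Finset.sup'_le_iff, WinPos]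
      constructor
      · intro h
        have h' : ∀ v, v ∉ σ → gameVal G true (σ ++ [v]) ≤ s := fun v hv =>
          h ⟨v, by simp [hv]⟩ (Finset.mem_attach _ _)
        refine ⟨fun v hv => ?_, ((key _ _ hv₀').1 (h' _ hv₀')).2.2⟩
        have hv' : v ∉ σ := by simpa using hv
        have := (key _ _ hv').1 (h' _ hv')
        exact ⟨this.2.1, this.1⟩
      · rintro ⟨h1, h2⟩ ⟨v, hv⟩ -
        have hv' : v ∉ σ := by simpa using hv
        have := h1 v (by simpa using hv')
        exact (key _ _ hv').2 ⟨this.2, this.1, h2⟩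
    · simp only [if_true, Finset.inf'_le_iff, WinPos]
      constructor
      · rintro ⟨⟨v, hv⟩, -, h⟩
        have hv' : v ∉ σ := by simpa using hv
        have := (key _ _ hv').1 h
        exact ⟨⟨v, by simpa using hv', this.2.1, this.1⟩, this.2.2⟩
      · rintro ⟨⟨v, hv, h1, h3⟩, h2⟩
        have hv' : v ∉ σ := by simpa using hv
        exact ⟨⟨v, by simp [hv']⟩, Finset.mem_attach _ _, (key _ _ hv').2 ⟨h3, h1, h2⟩⟩

/-- If `σ` is a preordering of `G` of even length, then
`σ-gcol(G) ≤ σ-gcol_B(G)`: Alice cannot obtain a smaller score in the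
`σ`-game by letting Bob move first (i.e. by skipping her first turn). -/
theorem sigmaGcol_le_sigmaGcolB {V : Type*} [Fintype V] (G : SimpleGraph V)
    (σ : List V) (hnodup : σ.Nodup) (heven : Even σ.length) :
    sigmaGcol G σ ≤ sigmaGcolB G σ := by
  unfold sigmaGcol sigmaGcolB
  rw [if_pos heven]
  have hle : σ.toFinset.card ≤ Fintype.card V := Finset.card_le_univ _
  have hc : σ.toFinset.card + (Fintype.card V - σ.toFinset.card) = Fintype.card V := by omega
  rw [gameVal_le_iff G _ _ true σ hc]
  have h := (gameVal_le_iff G _ _ false σ hc).1 (le_refl (gameVal G false σ))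
  exact ⟨(win_main G _ _).1 _ hc h.1, h.2⟩
end

section
/- The game coloring number is monotone: if H is a subgraph of a finite simple graph G, then gcol(H) ≤ gcol(G). -/
open scoped Classical

def Bef {V : Type*} (τ : List V) (u v : V) : Prop :=
  ∃ i j : Fin τ.length, i < j ∧ τ.get i = u ∧ τ.get j = v

theorem Bef.append {V : Type*} {τ : List V} {u v : V} (h : Bef τ u v) (x : V) :
    Bef (τ ++ [x]) u v := by
  obtain ⟨i, j, hij, hi, hj⟩ := h
  refine ⟨⟨i.1, by simp <;> omega⟩, ⟨j.1, by simp <;> omega⟩, hij, ?_, ?_⟩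
  · simpa [List.getElem_append] using hi
  · simpa [List.getElem_append] using hj

theorem bef_last {V : Type*} {τ : List V} {u : V} (h : u ∈ τ) (x : V) :
    Bef (τ ++ [x]) u x := by
  obtain ⟨i, hi, hh⟩ := List.getElem_of_mem h
  refine ⟨⟨i, by simp; omega⟩, ⟨τ.length, by simp⟩, hi, ?_, ?_⟩
  · simpa [List.getElem_append, hi] using hh
  · simp

theorem Bef.mem_left {V : Type*} {τ : List V} {u v x : V} (h : Bef (τ ++ [x]) u v) :
    u ∈ τ := by
  obtain ⟨i, j, hij, hi, hj⟩ := h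
  have hj2 := j.2
  have : i.1 < j.1 := hij
  simp at hj2
  have h1 : i.1 < τ.length := by omega
  rw [List.get_eq_getElem, List.getElem_append_left h1] at hi
  exact hi ▸ List.getElem_mem h1

theorem Bef.of_append {V : Type*} {τ : List V} {u v x : V} (h : Bef (τ ++ [x]) u v)
    (hv : v ≠ x) : Bef τ u v := by
  obtain ⟨i, j, hij, hi, hj⟩ := h
  have hj2 := j.2
  have hlt : i.1 < j.1 := hij
  simp at hj2
  by_cases h2 : j.1 < τ.length
  · have h1 : i.1 < τ.length := by omega
    rw [List.get_eq_getElem, List.getElem_append_left h1] at hi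
    rw [List.get_eq_getElem, List.getElem_append_left h2] at hj
    exact ⟨⟨i.1, h1⟩, ⟨j.1, h2⟩, hlt, hi, hj⟩
  · exfalso
    rw [List.get_eq_getElem, List.getElem_append_right (by omega)] at hj
    simp at hj
    exact hv hj.symm

noncomputable def unch {V : Type*} [Fintype V] (σ : List V) : ℕ :=
  (Finset.univ.filter (fun v : V => v ∉ σ)).card

theorem unch_lt {V : Type*} [Fintype V] {σ : List V} {v : V} (hv : v ∉ σ) :
    unch (σ ++ [v]) < unch σ := by
  apply Finset.card_lt_card
  constructor
  · intro u hu
    simp only [Finset.mem_filter, List.mem_append] at hu ⊢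
    exact ⟨hu.1, fun h' => hu.2 (Or.inl h')⟩
  · intro hsub
    have := hsub (Finset.mem_filter.mpr ⟨Finset.mem_univ _, hv⟩)
    simp at this

theorem gameVal_over {V : Type*} [Fintype V] (G : SimpleGraph V) (b : Bool) {σ : List V}
    (h : ∀ v, v ∈ σ) : gameVal G b σ = colOrd G σ := by
  rw [gameVal, dif_neg]
  simp [Finset.filter_nonempty_iff, h]

theorem gameVal_alice {V : Type*} [Fintype V] (G : SimpleGraph V) {σ : List V}
    (h : ∃ v, v ∉ σ) (s : ℕ) :
    gameVal G true σ ≤ s ↔ ∃ v, v ∉ σ ∧ gameVal G false (σ ++ [v]) ≤ s := by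
  rw [gameVal, dif_pos (by simpa [Finset.filter_nonempty_iff] using h), if_pos rfl]
  simp [Finset.inf'_le_iff]

theorem gameVal_bob {V : Type*} [Fintype V] (G : SimpleGraph V) {σ : List V}
    (h : ∃ v, v ∉ σ) (s : ℕ) :
    gameVal G false σ ≤ s ↔ ∀ v, v ∉ σ → gameVal G true (σ ++ [v]) ≤ s := by
  rw [gameVal, dif_pos (by simpa [Finset.filter_nonempty_iff] using h), if_neg (by simp)]
  simp [Finset.sup'_le_iff]

/-- whoever is to move, some move does not increase the value -/
theorem gameVal_move {V : Type*} [Fintype V] (G : SimpleGraph V) (b : Bool) {σ : List V}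
    (h : ∃ v, v ∉ σ) {s : ℕ} (hs : gameVal G b σ ≤ s) :
    ∃ v, v ∉ σ ∧ gameVal G (!b) (σ ++ [v]) ≤ s := by
  cases b with
  | true => exact (gameVal_alice G h s).1 hs
  | false =>
    obtain ⟨v, hv⟩ := h
    exact ⟨v, hv, (gameVal_bob G ⟨v, hv⟩ s).1 hs v hv⟩

/-- if all moves stay below `s` then so does the value -/
theorem gameVal_le_of_all {V : Type*} [Fintype V] (G : SimpleGraph V) (b : Bool) {σ : List V}
    (h : ∃ v, v ∉ σ) {s : ℕ} (hs : ∀ v, v ∉ σ → gameVal G (!b) (σ ++ [v]) ≤ s) :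
    gameVal G b σ ≤ s := by
  cases b with
  | true =>
    obtain ⟨v, hv⟩ := h
    exact (gameVal_alice G ⟨v, hv⟩ s).2 ⟨v, hv, hs v hv⟩
  | false => exact (gameVal_bob G h s).2 hs

theorem backDeg_append {V : Type*} [Fintype V] (G : SimpleGraph V) (τ : List V) (x v : V) :
    backDeg G τ v ≤ backDeg G (τ ++ [x]) v := by
  apply Finset.card_le_card
  intro u hu
  simp only [Finset.mem_filter] at hu ⊢
  exact ⟨hu.1, hu.2.1, Bef.append (τ := τ) hu.2.2 x⟩

theorem backDeg_le {V : Type*} [Fintype V] (G : SimpleGraph V) {s : ℕ} (n : ℕ) :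
    ∀ (b : Bool) (τ : List V), unch τ = n → gameVal G b τ ≤ s →
      ∀ v, 1 + backDeg G τ v ≤ s := by
  induction n using Nat.strong_induction_on with
  | _ n ih =>
    intro b τ hn hs v
    by_cases h : ∃ v, v ∉ τ
    · obtain ⟨x, hx, hx'⟩ := gameVal_move G b h hs
      have := ih _ (hn ▸ unch_lt hx) _ _ rfl hx' v
      have := backDeg_append G τ x v
      omega
    · push Not at h
      rw [gameVal_over G b h] at hs
      exact (Finset.le_sup (f := fun v => 1 + backDeg G τ v) (Finset.mem_univ v)).trans hs

noncomputable def dg {V : Type*} [Fintype V] (G : SimpleGraph V) (v : V) : ℕ :=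
  (Finset.univ.filter (fun u => G.Adj v u)).card

theorem exists_safe {V : Type*} [Fintype V] (G : SimpleGraph V) {s : ℕ} (n : ℕ) :
    ∀ (b : Bool) (τ : List V), unch τ = n → (∃ v, v ∉ τ) → gameVal G b τ ≤ s →
      ∃ v, v ∉ τ ∧ 1 + dg G v ≤ s := by
  induction n using Nat.strong_induction_on with
  | _ n ih =>
    intro b τ hn h hs
    obtain ⟨x, hx, hx'⟩ := gameVal_move G b h hs
    by_cases h2 : ∃ v, v ∉ τ ++ [x]
    · obtain ⟨v, hv, hv'⟩ := ih _ (hn ▸ unch_lt hx) _ _ rfl h2 hx'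
      exact ⟨v, fun h => hv (by simp [h]), hv'⟩
    · push Not at h2
      refine ⟨x, hx, le_trans ?_ (backDeg_le G _ _ _ rfl hx' x)⟩
      apply Nat.add_le_add_left
      apply Finset.card_le_card
      intro u hu
      simp only [Finset.mem_filter] at hu ⊢
      refine ⟨hu.1, hu.2, bef_last ?_ x⟩
      have h3 := h2 u
      have : u ≠ x := hu.2.ne'
      simpa [this] using h3

structure GInv {W V : Type*} [Fintype W] (H : SimpleGraph W) (f : W → V) (s : ℕ)
    (σ : List W) (τ : List V) : Prop where
  i1 : ∀ w ∈ σ, f w ∈ τ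
  i2 : ∀ w, f w ∈ τ → w ∈ σ ∨ 1 + dg H w ≤ s
  i3 : ∀ w ∈ σ, 1 + dg H w ≤ s ∨ ∀ u, H.Adj w u → Bef σ u w → Bef τ (f u) (f w)

section
variable {W V : Type*} [Fintype W] [Fintype V] {H : SimpleGraph W} {G : SimpleGraph V}
  {f : W → V} {s : ℕ} {σ : List W} {τ : List V}

theorem GInv.both (hf : Function.Injective f) (h : GInv H f s σ τ) {w : W} (hw : w ∉ σ) :
    GInv H f s (σ ++ [w]) (τ ++ [f w]) := by
  refine ⟨?_, ?_, ?_⟩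
  · intro x hx
    rcases List.mem_append.1 hx with hx | hx
    · exact List.mem_append_left _ (h.i1 x hx)
    · simp at hx; simp [hx]
  · intro x hx
    rcases List.mem_append.1 hx with hx | hx
    · exact (h.i2 x hx).imp_left (List.mem_append_left _)
    · left; simp at hx; simp [hf hx]
  · intro x hx
    by_cases hxw : x = w
    · subst hxw
      exact Or.inr fun u _ hb => bef_last (h.i1 u hb.mem_left) _
    · have hx : x ∈ σ := by simpa [hxw] using hx
      exact (h.i3 x hx).imp_right fun h u hu hb => (h u hu (hb.of_append hxw)).append _

theorem GInv.real (h : GInv H f s σ τ) {w : W} (hw : w ∉ σ) (hfw : f w ∈ τ) :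
    GInv H f s (σ ++ [w]) τ := by
  refine ⟨?_, ?_, ?_⟩
  · intro x hx
    rcases List.mem_append.1 hx with hx | hx
    · exact h.i1 x hx
    · simp at hx; simpa [hx] using hfw
  · intro x hx
    exact (h.i2 x hx).imp_left (List.mem_append_left _)
  · intro x hx
    by_cases hxw : x = w
    · subst hxw
      exact Or.inl ((h.i2 _ hfw).resolve_left hw)
    · have hx : x ∈ σ := by simpa [hxw] using hx
      exact (h.i3 x hx).imp_right fun h u hu hb => h u hu (hb.of_append hxw)

theorem GInv.imag (h : GInv H f s σ τ) {v : V} (hv : ∀ w, f w = v → 1 + dg H w ≤ s) :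
    GInv H f s σ (τ ++ [v]) := by
  refine ⟨?_, ?_, ?_⟩
  · intro x hx
    exact List.mem_append_left _ (h.i1 x hx)
  · intro x hx
    rcases List.mem_append.1 hx with hx | hx
    · exact h.i2 x hx
    · right; simp at hx; exact hv _ hx
  · intro x hx
    exact (h.i3 x hx).imp_right fun h u hu hb => (h u hu hb).append _

theorem GInv.real_over (hf : Function.Injective f) (hH : ∀ a b, H.Adj a b → G.Adj (f a) (f b))
    (h : GInv H f s σ τ) (a b : Bool) (ho : ∀ w, w ∈ σ)
    (hs : gameVal G b τ ≤ s) : gameVal H a σ ≤ s := by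
  rw [gameVal_over H a ho]
  apply Finset.sup_le
  intro w _
  rcases h.i3 w (ho w) with h3 | h3
  · refine le_trans (Nat.add_le_add_left ?_ 1) h3
    apply Finset.card_le_card
    intro u hu
    simp only [Finset.mem_filter] at hu ⊢
    exact ⟨hu.1, hu.2.1⟩
  · refine le_trans (Nat.add_le_add_left ?_ 1) (backDeg_le G _ b τ rfl hs (f w))
    apply Finset.card_le_card_of_injOn f
    · intro u hu
      simp only [Finset.coe_filter, Set.mem_ofPred_eq] at hu ⊢
      exact ⟨Finset.mem_univ _, hH _ _ hu.2.1, h3 u hu.2.1 hu.2.2⟩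
    · exact hf.injOn

theorem GInv.imag_over (hf : Function.Injective f) (hH : ∀ a b, H.Adj a b → G.Adj (f a) (f b))
    (b : Bool) (ho : ∀ v, v ∈ τ) (hs : gameVal G b τ ≤ s) (n : ℕ) :
    ∀ (a : Bool) (σ : List W), unch σ = n → GInv H f s σ τ → gameVal H a σ ≤ s := by
  induction n using Nat.strong_induction_on with
  | _ n ih =>
    intro a σ hn h
    by_cases hr : ∃ w, w ∉ σ
    · exact gameVal_le_of_all H a hr fun w hw =>
        ih _ (hn ▸ unch_lt hw) _ _ rfl (h.real hw (ho _))
    · push Not at hr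
      exact h.real_over hf hH a b hr hs

theorem dg_le (hf : Function.Injective f) (hH : ∀ a b, H.Adj a b → G.Adj (f a) (f b)) (w : W) :
    dg H w ≤ dg G (f w) := by
  apply Finset.card_le_card_of_injOn f
  · intro u hu
    simp only [Finset.coe_filter, Set.mem_ofPred_eq] at hu ⊢
    exact ⟨Finset.mem_univ _, hH _ _ hu.2⟩
  · exact hf.injOn

theorem GInv.main (hf : Function.Injective f) (hH : ∀ a b, H.Adj a b → G.Adj (f a) (f b))
    (n : ℕ) : ∀ (a b : Bool) (σ : List W) (τ : List V), unch σ + unch τ = n →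
      (b = true → a = true) → GInv H f s σ τ → gameVal G b τ ≤ s → gameVal H a σ ≤ s := by
  induction n using Nat.strong_induction_on with
  | _ n ih =>
    intro a b σ τ hn hab h hs
    by_cases hr : ∃ w, w ∉ σ
    swap
    · push Not at hr
      exact h.real_over hf hH a b hr hs
    by_cases hi : ∃ v, v ∉ τ
    swap
    · push Not at hi
      exact GInv.imag_over hf hH b hi hs _ a σ rfl h
    cases b with
    | true =>
      obtain rfl := hab rfl
      obtain ⟨v, hv, hv'⟩ := (gameVal_alice G hi s).1 hs
      have l1 := unch_lt hv
      by_cases hw : ∃ w, f w = v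
      · obtain ⟨w, rfl⟩ := hw
        have hw : w ∉ σ := fun hw => hv (h.i1 w hw)
        have l2 := unch_lt hw
        exact (gameVal_alice H hr s).2 ⟨w, hw,
          ih _ (by omega) _ _ _ _ rfl (by simp) (h.both hf hw) hv'⟩
      · exact ih _ (by omega) _ _ _ _ rfl (by simp)
          (h.imag fun w e => (hw ⟨w, e⟩).elim) hv'
    | false =>
      cases a with
      | true =>
        obtain ⟨v, hv, hd⟩ := exists_safe G _ _ τ rfl hi hs
        have l1 := unch_lt hv
        refine ih _ (by omega) true true _ _ rfl (by simp) (h.imag (v := v) ?_)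
          ((gameVal_bob G hi s).1 hs v hv)
        rintro w rfl
        have := dg_le hf hH w
        omega
      | false =>
        refine (gameVal_bob H hr s).2 fun w hw => ?_
        have l2 := unch_lt hw
        by_cases hfw : f w ∈ τ
        · exact ih _ (by omega) _ _ _ _ rfl (by simp) (h.real hw hfw) hs
        · have l1 := unch_lt hfw
          exact ih _ (by omega) true true _ _ rfl (by simp) (h.both hf hw)
            ((gameVal_bob G hi s).1 hs _ hfw)

end

/-- Monotonicity of the game coloring number: if `H` is a
subgraph of `G`, then `gcol(H) ≤ gcol(G)`. -/
theorem gcol_subgraph_le {V : Type*} [Fintype V] (G : SimpleGraph V)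
    (H : G.Subgraph) :
    gcol H.coe ≤ gcol G := by
  refine GInv.main (f := ((↑) : H.verts → V)) Subtype.val_injective ?_ _ true true [] [] rfl
    (by simp) ⟨by simp, by simp, by simp⟩ le_rfl
  intro a b hab
  exact H.adj_sub hab
end
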